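/- Let Δ be a simplicial complex over a field k and suppose J ⊆ V(Δ) is an excellent set for Δ. If Δ satisfies Serre's condition (S_ℓ), then the anti-star ast_Δ(J) = {G ∈ Δ : J ∩ G = ∅} also satisfies (S_ℓ). -/

import Mathlib

open Finset

/-- An abstract simplicial complex on vertex type `V`, given by a finite, downward closed
family of finite subsets of `V` (its faces). -/
structure SComplex (V : Type) [DecidableEq V] where
  faces : Finset (Finset V)
  down_closed : ∀ ⦃s t : Finset V⦄, s ∈ faces → t ⊆ s → t ∈ faces

namespace SComplex

variable {V : Type} [DecidableEq V]

/-- `K.rank = d = dim k[Δ] = dim Δ + 1` is the maximal cardinality of a face of `K`. -/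
def rank (K : SComplex V) : ℕ := K.faces.sup Finset.card

/-- `F` is a facet (maximal face) of `K`. -/
def IsFacet (K : SComplex V) (F : Finset V) : Prop :=
  F ∈ K.faces ∧ ∀ G ∈ K.faces, F ⊆ G → F = G

/-- `K` is pure: all facets have the maximal cardinality `K.rank`. -/
def Pure (K : SComplex V) : Prop := ∀ F : Finset V, K.IsFacet F → F.card = K.rank

/-- The link `lk_K(T) = {G ∈ K | T ∪ G ∈ K, T ∩ G = ∅}`. -/
def link (K : SComplex V) (T : Finset V) : SComplex V where
  faces := K.faces.filter fun G => Disjoint T G ∧ T ∪ G ∈ K.faces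
  down_closed := by
    intro s t hs hts
    simp only [Finset.mem_filter] at hs ⊢
    exact ⟨K.down_closed hs.1 hts, hs.2.1.mono_right hts,
      K.down_closed hs.2.2 (Finset.union_subset_union_right hts)⟩

/-- The anti-star `ast_K(T) = {G ∈ K | T ∩ G = ∅}`. -/
def antistar (K : SComplex V) (T : Finset V) : SComplex V where
  faces := K.faces.filter fun G => Disjoint T G
  down_closed := by
    intro s t hs hts
    simp only [Finset.mem_filter] at hs ⊢
    exact ⟨K.down_closed hs.1 hts, hs.2.mono_right hts⟩

/-- The induced subcomplex of `K` on a set `W` of vertices. -/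
def restrict (K : SComplex V) (W : Finset V) : SComplex V where
  faces := K.faces.filter fun G => G ⊆ W
  down_closed := by
    intro s t hs hts
    simp only [Finset.mem_filter] at hs ⊢
    exact ⟨K.down_closed hs.1 hts, hts.trans hs.2⟩

/-- The subcomplex of faces of cardinality at most `m`; as cardinality = dimension + 1, this is
the `(m-1)`-skeleton `Δ^{(m-1)}`. -/
def skelCard (K : SComplex V) (m : ℕ) : SComplex V where
  faces := K.faces.filter fun G => G.card ≤ m
  down_closed := by
    intro s t hs hts
    simp only [Finset.mem_filter] at hs ⊢
    exact ⟨K.down_closed hs.1 hts, le_trans (Finset.card_le_card hts) hs.2⟩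

/-- `K.trunc j` is `[Δ]_{>j}`, the order complex of the poset of faces of `K` of cardinality
(equivalently, of height in the face poset) `> j`: its faces are the chains of such faces.
For `j = 0` this is the barycentric subdivision of `K`. -/
def trunc (K : SComplex V) (j : ℕ) : SComplex (Finset V) where
  faces := K.faces.powerset.filter fun C =>
    (∀ s ∈ C, j < s.card) ∧ ∀ s ∈ C, ∀ t ∈ C, s ⊆ t ∨ t ⊆ s
  down_closed := by
    intro s t hs hts
    simp only [Finset.mem_powerset, Finset.mem_filter] at hs ⊢
    exact ⟨hts.trans hs.1, fun a ha => hs.2.1 a (hts ha),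
      fun a ha b hb => hs.2.2 a (hts ha) b (hts hb)⟩

/-- `Δ_A`: the complex obtained from `K` by deleting all faces containing a member of `A`. -/
def deleteAbove (K : SComplex V) (A : Finset (Finset V)) : SComplex V where
  faces := K.faces.filter fun s => ∀ τ ∈ A, ¬ τ ⊆ s
  down_closed := by
    intro s t hs hts
    simp only [Finset.mem_filter] at hs ⊢
    exact ⟨K.down_closed hs.1 hts, fun τ hτ hsub => hs.2 τ hτ (hsub.trans hts)⟩

/-- The number of faces of `K` of cardinality `i`, i.e. the face number `f_{i-1}(K)`. -/
def faceCount (K : SComplex V) (i : ℕ) : ℕ := (K.faces.filter fun s => s.card = i).card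

/-- The Euler characteristic `χ(K) = Σ_{i ≥ 0} (-1)^i f_i(K)`. -/
def eulerChar (K : SComplex V) : ℤ :=
  ∑ s ∈ K.faces.filter (fun s => s ≠ ∅), (-1 : ℤ) ^ (s.card - 1)

/-- The reduced Euler characteristic `χ̃(K) = χ(K) - 1`. -/
def reducedEulerChar (K : SComplex V) : ℤ := eulerChar K - 1

end SComplex

/-! ### Simplicial homology with coefficients in a field `k` -/

/-- An arbitrary linear order on a finite type. -/
noncomputable def arbOrder (V : Type) [Fintype V] : LinearOrder V :=
  LinearOrder.lift' (Fintype.equivFin V) (Equiv.injective _)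

namespace SComplex

variable {V : Type} [DecidableEq V]

/-- The faces of `K` of cardinality `n`, as a type. -/
def Faces (K : SComplex V) (n : ℕ) : Type :=
  {s : Finset V // s ∈ K.faces ∧ s.card = n}

/-- The space of reduced simplicial `n`-chains of `K`: formal `k`-linear combinations of the
faces of cardinality `n` (such a face has dimension `n - 1`; the empty face sits in degree `0`,
which produces *reduced* homology). -/
abbrev ChainsOf (k : Type) [Field k] (K : SComplex V) (n : ℕ) : Type := Faces K n →₀ k

variable (k : Type) [Field k] [Fintype V]

/-- The simplicial boundary map, with signs determined by an arbitrary but fixed linear order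
on the vertices. -/
noncomputable def bd (K : SComplex V) (n : ℕ) :
    ChainsOf k K n →ₗ[k] ChainsOf k K (n - 1) :=
  letI : LinearOrder V := arbOrder V
  Finsupp.lsum k fun s : Faces K n =>
    LinearMap.toSpanSingleton k (ChainsOf k K (n - 1))
      (∑ x ∈ s.1.attach,
        ((-1 : k) ^ (s.1.filter (fun y => y < x.1)).card) •
          Finsupp.single
            (⟨s.1.erase x.1,
              K.down_closed s.2.1 (Finset.erase_subset _ _),
              by rw [Finset.card_erase_of_mem x.2, s.2.2]⟩ : Faces K (n - 1))
            (1 : k))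

/-- `HVanish k K i` says that the reduced simplicial homology `H̃_{i-1}(K; k)` vanishes.
Note the indexing convention: the index `i` is the *cardinality* of the relevant faces, so this
is reduced homology in topological degree `i - 1`; e.g. `HVanish k K 1` says `H̃₀(K; k) = 0`
(`K` is connected and nonempty) and `HVanish k K 0` says `H̃₋₁(K; k) = 0` (`K` has a face).
Since the cycles in degree `i - 1` are `ker ∂ᵢ` and the boundaries are `im ∂ᵢ₊₁`, and the
boundaries are always contained in the cycles, vanishing of homology says exactly that every
cycle is a boundary. -/
def HVanish (K : SComplex V) (i : ℕ) : Prop :=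
  LinearMap.ker (bd k K i) ≤ LinearMap.range (bd k K (i + 1))

/-- `redHomologyRank k K i` is the dimension `dim_k H̃_{i-1}(K; k)` of the reduced simplicial
homology of `K` in topological degree `i - 1` (cardinality index `i`), namely the dimension of
the cycles `ker ∂ᵢ` modulo the boundaries `im ∂ᵢ₊₁`. -/
noncomputable def redHomologyRank (K : SComplex V) (i : ℕ) : ℕ :=
  Module.finrank k ↥(LinearMap.ker (bd k K i)) -
    Module.finrank k ↥(LinearMap.range (bd k K (i + 1)) ⊓ LinearMap.ker (bd k K i))

end SComplex

/-! ### Depth, Serre conditions, and Stanley–Reisner rings -/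

/-- The length of a longest regular sequence on `R` contained in the ideal `I`
(the `I`-depth of `R`). -/
noncomputable def depthIn (R : Type) [CommRing R] (I : Ideal R) : ℕ :=
  sSup {n : ℕ | ∃ rs : List R, rs.length = n ∧ (∀ r ∈ rs, r ∈ I) ∧
    RingTheory.Sequence.IsRegular R rs}

/-- Serre's condition `(S_ℓ)` for a commutative ring:
`depth R_p ≥ min {ℓ, dim R_p}` for every prime `p`. -/
def SerreCondS (ℓ : ℕ) (R : Type) [CommRing R] : Prop :=
  ∀ (p : Ideal R) (hp : p.IsPrime),
    haveI := hp
    min ((ℓ : ℕ∞) : WithBot ℕ∞) (ringKrullDim (Localization.AtPrime p)) ≤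
      ((depthIn (Localization.AtPrime p)
        (IsLocalRing.maximalIdeal (Localization.AtPrime p)) : ℕ∞) : WithBot ℕ∞)

namespace SComplex

variable {V : Type} [DecidableEq V] (k : Type) [Field k]

/-- The Stanley–Reisner ideal of `K`: generated by the squarefree monomials supported on
non-faces. -/
noncomputable def srIdeal (K : SComplex V) : Ideal (MvPolynomial V k) :=
  Ideal.span ((fun s : Finset V => ∏ v ∈ s, MvPolynomial.X v) '' {s : Finset V | s ∉ K.faces})

/-- The Stanley–Reisner ring `k[Δ]`. -/
noncomputable abbrev SRRing (K : SComplex V) : Type := MvPolynomial V k ⧸ srIdeal k K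

/-- `depth k[Δ]`: the depth of the Stanley–Reisner ring with respect to its irrelevant
(graded maximal) ideal. -/
noncomputable def srDepth (K : SComplex V) : ℕ :=
  depthIn (SRRing k K)
    (Ideal.span (Set.range fun v : V => Ideal.Quotient.mk (srIdeal k K) (MvPolynomial.X v)))

/-- `k[Δ]` satisfies Serre's condition `(S_ℓ)`. -/
def SerreS (ℓ : ℕ) (K : SComplex V) : Prop := SerreCondS ℓ (SRRing k K)

end SComplex

/-! ### Order complexes of finite posets -/

/-- The order complex `O(P)` of a finite poset: its faces are the chains of `P`. -/
def orderComplex (P : Type) [DecidableEq P] [Fintype P] [PartialOrder P]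
    [∀ a b : P, Decidable (a ≤ b)] : SComplex P where
  faces := Finset.univ.filter fun C : Finset P => ∀ a ∈ C, ∀ b ∈ C, a ≤ b ∨ b ≤ a
  down_closed := by
    intro s t hs hts
    simp only [Finset.mem_filter, Finset.mem_univ, true_and] at hs ⊢
    exact fun a ha b hb => hs a (hts ha) b (hts hb)

/-- The height of an element of a finite poset: the maximal cardinality of a chain with top
element `p` (so minimal elements have height `1`). -/
def pheight {P : Type} [DecidableEq P] [Fintype P] [PartialOrder P]
    [∀ a b : P, Decidable (a ≤ b)] (p : P) : ℕ :=
  Finset.sup (Finset.univ.filter fun C : Finset P =>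
    p ∈ C ∧ (∀ a ∈ C, a ≤ p) ∧ ∀ a ∈ C, ∀ b ∈ C, a ≤ b ∨ b ≤ a) Finset.card

/-- The height `ht P` of a finite poset: the maximal cardinality of a chain. -/
def pheightMax (P : Type) [DecidableEq P] [Fintype P] [PartialOrder P]
    [∀ a b : P, Decidable (a ≤ b)] : ℕ :=
  Finset.univ.sup (pheight (P := P))

/-- `O(P_{>j})`: the full subcomplex of the order complex on the elements of height `> j`. -/
def ocAbove (P : Type) [DecidableEq P] [Fintype P] [PartialOrder P]
    [∀ a b : P, Decidable (a ≤ b)] (j : ℕ) : SComplex P :=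
  (orderComplex P).restrict (Finset.univ.filter fun p => j < pheight p)

/-- The face poset `F(Δ)` of a simplicial complex: the nonempty faces, ordered by inclusion. -/
abbrev SComplex.FacePoset {V : Type} [DecidableEq V] (K : SComplex V) : Type :=
  {s : Finset V // s ∈ K.faces ∧ s ≠ ∅}

instance {V : Type} [DecidableEq V] (K : SComplex V) :
    ∀ a b : K.FacePoset, Decidable (a ≤ b) := fun a b =>
  decidable_of_iff (a.1 ≤ b.1) Subtype.coe_le_coe

/-!
Let `x_v` denote the class of the variable `v` in `k[Δ]`. Since `J` is independent, the `x_j` with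
`j ∈ J` are pairwise orthogonal, and `k[ast_Δ(J)] = k[Δ]/(x_j : j ∈ J)`. As `k[Δ]` is reduced, the
ideals `(x_j)` have direct sum `(x_j : j ∈ J)`, and multiplication by `x_j` on
`(x_j) ≅ k[Δ]/ann x_j` is injective with cokernel `k[Δ]/(ann x_j + (x_j)) = k[link j]`. So if
`k[Δ]` and the `k[link j]` have local depth at least `n`, then `(x_j)` has depth at least `n + 1`
and `k[ast_Δ(J)]` has depth at least `n`.

Links inherit `(S_ℓ)`: inverting `x_j` turns `k[Δ]` into a localization of `k[star j]`, a polynomial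
ring over `k[link j]`, and depth descends along the flat map `k[link j] → k[star j]`. It remains
to compare heights at the primes `P` of `k[ast_Δ(J)]` and `P'` of `k[link j]` lying over the same
prime of `k[Δ]`. For `ℓ ≥ 2` the complex is pure: a face maximal among those contained in facets of
different sizes has a disconnected link of positive dimension, contradicting `(S_2)` at its prime.
Purity and excellence provide, for each face `G` of the anti-star, faces of `link j` of size at
least `#G`. A minimal prime under `P` computing its height is given by such a `G`, and since the
variables lying in `P` are interchangeable modulo `P`, moving the vertices of `G` into `link j`
bounds the height of `P` by that of `P'`.
-/

universe u

/-! ### Depth of modules over local rings -/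

section Depth

open CategoryTheory Abelian RingTheory.Sequence IsLocalRing Limits

theorem exists_mul_eq_of_isSMulRegular_quotSMulTop {R : Type*} [CommRing R] {y z a b : R}
    (hy : IsSMulRegular (QuotSMulTop z R) y) (h : y * a = z * b) : ∃ c, z * c = a := by
  have ha : (Submodule.Quotient.mk a : QuotSMulTop z R) = 0 := by
    refine hy.right_eq_zero_of_smul ?_
    rw [← Submodule.Quotient.mk_smul, Submodule.Quotient.mk_eq_zero]
    exact (Submodule.mem_smul_pointwise_iff_exists _ _ _).mpr ⟨b, trivial, h.symm⟩
  simpa only [Submodule.Quotient.mk_eq_zero, Submodule.mem_smul_pointwise_iff_exists,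
    Submodule.mem_top, true_and, smul_eq_mul] using ha

/-- `M` has depth at least `n` over the local ring `R`, expressed by the vanishing of
`Ext R (R ⧸ 𝔪) M` in degrees below `n`, so that long exact sequences apply. The zero module
has every depth. -/
def DepthGE (R : Type u) [CommRing R] [IsLocalRing R] (M : Type u) [AddCommGroup M] [Module R M]
    (n : ℕ) : Prop :=
  ∀ i < n, Subsingleton (Ext (ModuleCat.of R (R ⧸ maximalIdeal R)) (ModuleCat.of R M) i)

namespace DepthGE

section Module

variable {R : Type u} [CommRing R] [IsLocalRing R]
  {M M₁ M₂ M₃ : Type u} [AddCommGroup M] [Module R M] [AddCommGroup M₁] [Module R M₁]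
  [AddCommGroup M₂] [Module R M₂] [AddCommGroup M₃] [Module R M₃] {n : ℕ}

theorem mono {m : ℕ} (h : DepthGE R M n) (hm : m ≤ n) : DepthGE R M m :=
  fun i hi => h i (hi.trans_le hm)

theorem of_subsingleton [Subsingleton M] : DepthGE R M n := fun i _ => by
  have hM : IsZero (ModuleCat.of R M) := ModuleCat.isZero_of_subsingleton _
  refine subsingleton_of_forall_eq 0 fun a => ?_
  rw [← Ext.comp_mk₀_id a, hM.eq_of_src (𝟙 _) 0, Ext.mk₀_zero, Ext.comp_zero]

theorem of_exact {f : M₁ →ₗ[R] M₂} {g : M₂ →ₗ[R] M₃} (hf : Function.Injective f)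
    (hg : Function.Surjective g) (hfg : Function.Exact f g)
    (h₁ : DepthGE R M₁ (n + 1)) (h₂ : DepthGE R M₂ n) : DepthGE R M₃ n := by
  intro i hi
  let S : ShortComplex (ModuleCat R) := .mk (ModuleCat.ofHom f) (ModuleCat.ofHom g)
    (ModuleCat.hom_ext (LinearMap.ext hfg.apply_apply_eq_zero))
  have hS : S.ShortExact :=
    { exact := (ShortComplex.ShortExact.moduleCat_exact_iff_function_exact _).mpr hfg
      mono_f := (ModuleCat.mono_iff_injective _).mpr hf
      epi_g := (ModuleCat.epi_iff_surjective _).mpr hg }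
  refine subsingleton_of_forall_eq 0 fun a => ?_
  obtain ⟨b, rfl⟩ := Ext.covariant_sequence_exact₃ _ hS a rfl ((h₁ (i + 1) (by omega)).elim _ _)
  rw [(h₂ i hi).elim b 0, Ext.zero_comp]

theorem congr (e : M₁ ≃ₗ[R] M₂) (h : DepthGE R M₁ n) : DepthGE R M₂ n :=
  of_exact (M₁ := PUnit) (f := 0) (fun _ _ _ => rfl) e.surjective
    ((LinearMap.exact_zero_iff_injective _ _).mpr e.injective) of_subsingleton h

theorem quotSMulTop {x : R} (hx : IsSMulRegular M x) (h : DepthGE R M (n + 1)) :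
    DepthGE R (QuotSMulTop x M) n :=
  of_exact (f := LinearMap.lsmul R M x) hx (Submodule.mkQ_surjective _)
    (LinearMap.exact_lsmul_mkQ_smul_top M x) h (h.mono n.le_succ)

theorem quotient_ofList {rs : List R} (hrs : IsWeaklyRegular M rs)
    (h : DepthGE R M (n + rs.length)) :
    DepthGE R (M ⧸ (Ideal.ofList rs • ⊤ : Submodule R M)) n := by
  induction rs generalizing M with
  | nil => exact h.congr (Submodule.quotEquivOfEqBot _ (by simp)).symm
  | cons x rs ih =>
    rw [isWeaklyRegular_cons_iff] at hrs
    exact (ih hrs.2 (quotSMulTop hrs.1 h)).congr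
      (Submodule.quotOfListConsSMulTopEquivQuotSMulTopInner M x rs).symm

section Finite

variable [Module.Finite R M]

theorem maximalIdeal_smul_top_lt_top [Nontrivial M] :
    maximalIdeal R • (⊤ : Submodule R M) < ⊤ :=
  (Submodule.top_ne_ideal_smul_of_le_jacobson_annihilator
    (maximalIdeal_le_jacobson _)).symm.lt_top

variable [IsNoetherianRing R]

theorem exists_isRegular [Nontrivial M] (h : DepthGE R M n) :
    ∃ rs : List R, rs.length = n ∧ (∀ r ∈ rs, r ∈ maximalIdeal R) ∧ IsRegular M rs := by
  refine ModuleCat.exists_isRegular_of_exists_subsingleton_ext (maximalIdeal R) n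
    (ModuleCat.of R M) maximalIdeal_smul_top_lt_top (ModuleCat.of R (R ⧸ maximalIdeal R)) ?_ h
  change Module.support R (R ⧸ maximalIdeal R) = _
  rw [Module.support_eq_zeroLocus, Ideal.annihilator_quotient]

theorem of_isWeaklyRegular {rs : List R} (hmem : ∀ r ∈ rs, r ∈ maximalIdeal R)
    (hrs : IsWeaklyRegular M rs) : DepthGE R M rs.length := by
  rcases subsingleton_or_nontrivial M
  · exact of_subsingleton
  refine ModuleCat.subsingleton_ext_of_exists_isRegular (maximalIdeal R)
    (ModuleCat.of R (R ⧸ maximalIdeal R)) ?_ (ModuleCat.of R M) maximalIdeal_smul_top_lt_top rs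
    hmem ((isRegular_iff_isWeaklyRegular_of_subset_maximalIdeal hmem).mpr hrs)
  change Module.support R (R ⧸ maximalIdeal R) ⊆ _
  rw [Module.support_eq_zeroLocus, Ideal.annihilator_quotient]

theorem succ_of_quotSMulTop {x : R} (hxm : x ∈ maximalIdeal R) (hx : IsSMulRegular M x)
    (h : DepthGE R (QuotSMulTop x M) n) : DepthGE R M (n + 1) := by
  rcases subsingleton_or_nontrivial M
  · exact of_subsingleton
  have := nontrivial_quotSMulTop_of_mem_maximalIdeal M hxm
  obtain ⟨rs, rfl, hm, hr⟩ := h.exists_isRegular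
  exact of_isWeaklyRegular (rs := x :: rs) (List.forall_mem_cons.mpr ⟨hxm, hm⟩)
    ((isWeaklyRegular_cons_iff M x rs).mpr ⟨hx, hr.1⟩)

theorem one_iff_exists_isSMulRegular :
    DepthGE R M 1 ↔ ∃ x ∈ maximalIdeal R, IsSMulRegular M x := by
  constructor
  · intro h
    rcases subsingleton_or_nontrivial M
    · exact ⟨0, zero_mem _, Function.injective_of_subsingleton _⟩
    obtain ⟨rs, hl, hm, hr⟩ := h.exists_isRegular
    obtain ⟨x, rfl⟩ := List.length_eq_one_iff.mp hl
    exact ⟨x, hm x List.mem_cons_self, ((isRegular_cons_iff M x []).mp hr).1⟩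
  · rintro ⟨x, hxm, hx⟩
    exact of_isWeaklyRegular (rs := [x]) (List.forall_mem_singleton.mpr hxm)
      ((isWeaklyRegular_singleton_iff M x).mpr hx)

theorem one_iff :
    DepthGE R M 1 ↔ ∀ u : M, (∀ a ∈ maximalIdeal R, a • u = 0) → u = 0 := by
  rw [one_iff_exists_isSMulRegular]
  refine ⟨fun ⟨x, hxm, hx⟩ u hu => hx.right_eq_zero_of_smul (hu x hxm), fun h => ?_⟩
  have : Subsingleton ((R ⧸ maximalIdeal R) →ₗ[R] M) := by
    refine subsingleton_of_forall_eq 0 fun f => Submodule.linearMap_qext _ (LinearMap.ext_ring ?_)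
    refine h _ fun a ha => ?_
    rw [← map_smul, smul_eq_mul, mul_one, LinearMap.comp_apply, Submodule.mkQ_apply,
      (Submodule.Quotient.mk_eq_zero _).mpr ha, map_zero]
  simpa only [Ideal.annihilator_quotient] using IsSMulRegular.subsingleton_linearMap_iff.mp this

end Finite

variable [IsNoetherianRing R]

theorem quotient_one_iff {I : Ideal R} :
    DepthGE R (R ⧸ I) 1 ↔ ∀ u, maximalIdeal R * Ideal.span {u} ≤ I → u ∈ I := by
  simp only [one_iff, (Submodule.Quotient.mk_surjective I).forall, ← Submodule.Quotient.mk_smul,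
    Submodule.Quotient.mk_eq_zero, smul_eq_mul, Ideal.mul_le, Ideal.mem_span_singleton']
  refine forall_congr' fun u => imp_congr_left ⟨?_, fun h a ha => h a ha u ⟨1, one_mul u⟩⟩
  rintro h a ha _ ⟨c, rfl⟩
  rw [mul_left_comm]
  exact I.mul_mem_left c (h a ha)

end Module

section ChangeOfRings

variable {R S : Type u} [CommRing R] [IsLocalRing R] [IsNoetherianRing R]
  [CommRing S] [IsLocalRing S] [IsNoetherianRing S] [Algebra R S] {n : ℕ}

theorem iff_of_surjective (hs : Function.Surjective (algebraMap R S)) :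
    DepthGE R S n ↔ DepthGE S S n := by
  have : Module.Finite R S := Module.Finite.of_surjective (Algebra.linearMap R S) hs
  have := IsLocalHom.of_surjective (algebraMap R S) hs
  have hmem (rs : List R) : (∀ s ∈ rs.map (algebraMap R S), s ∈ maximalIdeal S) ↔
      ∀ r ∈ rs, r ∈ maximalIdeal R := by
    simp only [List.forall_mem_map, mem_maximalIdeal, mem_nonunits_iff, isUnit_map_iff]
  constructor
  · intro h
    obtain ⟨rs, rfl, hm, hr⟩ := h.exists_isRegular
    simpa only [List.length_map] using of_isWeaklyRegular ((hmem rs).mpr hm)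
      ((isWeaklyRegular_map_algebraMap_iff S S rs).mpr hr.1)
  · intro h
    obtain ⟨ss, rfl, hm, hr⟩ := h.exists_isRegular
    obtain ⟨rs, rfl⟩ := List.map_surjective_iff.mpr hs ss
    simpa only [List.length_map] using of_isWeaklyRegular ((hmem rs).mp hm)
      ((isWeaklyRegular_map_algebraMap_iff S S rs).mp hr.1)

theorem quotient_ker_iff (hs : Function.Surjective (algebraMap R S)) :
    DepthGE R (R ⧸ RingHom.ker (algebraMap R S)) n ↔ DepthGE S S n := by
  let e : (R ⧸ RingHom.ker (algebraMap R S)) ≃ₗ[R] S :=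
    (Algebra.linearMap R S).quotKerEquivOfSurjective hs
  rw [← iff_of_surjective hs]
  exact ⟨.congr e, .congr e.symm⟩

theorem quotient_one_of_faithfullyFlat [Module.FaithfullyFlat R S]
    (hm : (maximalIdeal R).map (algebraMap R S) = maximalIdeal S) {I : Ideal R}
    (h : DepthGE S (S ⧸ I.map (algebraMap R S)) 1) : DepthGE R (R ⧸ I) 1 := by
  rw [quotient_one_iff] at h ⊢
  intro u hu
  rw [← Ideal.comap_map_eq_self_of_faithfullyFlat (B := S) I]
  refine h _ ?_
  rw [← hm, ← Set.image_singleton, ← Ideal.map_span, ← Ideal.map_mul]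
  exact Ideal.map_mono hu

theorem exists_isWeaklyRegular_of_faithfullyFlat [Module.FaithfullyFlat R S]
    (hm : (maximalIdeal R).map (algebraMap R S) = maximalIdeal S) (h : DepthGE S S n) :
    ∃ rs : List R, rs.length = n ∧ (∀ r ∈ rs, r ∈ maximalIdeal R) ∧ IsWeaklyRegular R rs := by
  induction n with
  | zero => exact ⟨[], rfl, List.forall_mem_nil _, .nil R R⟩
  | succ n ih =>
    obtain ⟨rs, rfl, hrm, hreg⟩ := ih (h.mono n.le_succ)
    have hS : DepthGE S (S ⧸ (Ideal.ofList rs).map (algebraMap R S)) 1 := by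
      have hregS : IsWeaklyRegular S (rs.map (algebraMap R S)) := IsWeaklyRegular.of_flat hreg
      rw [Ideal.map_ofList, ← Ideal.mul_top (Ideal.ofList _)]
      exact quotient_ofList hregS (h.mono (by rw [List.length_map, add_comm]))
    obtain ⟨x, hx, hxr⟩ :=
      one_iff_exists_isSMulRegular.mp (quotient_one_of_faithfullyFlat hm hS)
    refine ⟨rs ++ [x], List.length_append, ?_, ?_⟩
    · exact List.forall_mem_append.mpr ⟨hrm, List.forall_mem_singleton.mpr hx⟩
    · rw [isWeaklyRegular_append_iff, isWeaklyRegular_singleton_iff, smul_eq_mul, Ideal.mul_top]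
      exact ⟨hreg, hxr⟩

theorem of_flat [Module.Flat R S]
    (hm : (maximalIdeal R).map (algebraMap R S) = maximalIdeal S)
    (h : DepthGE S S n) : DepthGE R R n := by
  have : IsLocalHom (algebraMap R S) := ((local_hom_TFAE (algebraMap R S)).out 0 2).mpr hm.le
  have : Module.FaithfullyFlat R S := Module.FaithfullyFlat.of_flat_of_isLocalHom
  obtain ⟨rs, rfl, hrm, hreg⟩ := exists_isWeaklyRegular_of_faithfullyFlat hm h
  exact of_isWeaklyRegular hrm hreg

end ChangeOfRings

theorem not_two_of_sup_eq_maximalIdeal {R : Type u} [CommRing R] [IsLocalRing R]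
    [IsNoetherianRing R] {I J : Ideal R} (hIJ : I * J = ⊥)
    (hsup : I ⊔ J = maximalIdeal R) (hI : I ≠ ⊥) (hJ : J ≠ ⊥) : ¬ DepthGE R R 2 := by
  intro h
  obtain ⟨rs, hl, hm, hr⟩ := h.exists_isRegular
  obtain ⟨z, y, rfl⟩ := List.length_eq_two.mp hl
  obtain ⟨hz, hw⟩ := (isWeaklyRegular_cons_iff R z [y]).mp hr.1
  have hy := ((isWeaklyRegular_cons_iff _ y []).mp hw).1
  have hzm := hm z List.mem_cons_self
  have hym := hm y (List.mem_cons_of_mem _ List.mem_cons_self)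
  rw [← hsup] at hzm hym
  obtain ⟨a, ha, b, hb, rfl⟩ := Submodule.mem_sup.mp hzm
  obtain ⟨i, hi, j, hj, rfl⟩ := Submodule.mem_sup.mp hym
  have hmul {r s : R} (hr : r ∈ I) (hs : s ∈ J) : r * s = 0 :=
    Ideal.mem_bot.mp (hIJ ▸ Ideal.mul_mem_mul hr hs)
  have hinf {e : R} (h₁ : e ∈ I) (h₂ : e ∈ J) : e = 0 :=
    hz.right_eq_zero_of_smul (by
      rw [smul_eq_mul, add_mul, hmul ha h₂, mul_comm b, hmul h₁ hb, add_zero])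
  obtain ⟨c, hc⟩ : ∃ c, (a + b) * c = a :=
    exists_mul_eq_of_isSMulRegular_quotSMulTop hy (b := i)
      (by linear_combination hmul ha hj - hmul hi hb)
  have hbc : b * c = 0 := by
    refine hinf ?_ (J.mul_mem_right c hb)
    rw [show b * c = a * (1 - c) by linear_combination hc]
    exact I.mul_mem_right _ ha
  rcases isUnit_or_isUnit_one_sub_self c with hu | hu
  · rw [hu.mul_left_eq_zero] at hbc
    refine hJ (eq_bot_iff.mpr fun e he => hz.right_eq_zero_of_smul ?_)
    rw [hbc, add_zero, smul_eq_mul, hmul ha he]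
  · have ha0 : a = 0 := hu.mul_left_eq_zero.mp (by linear_combination hbc - hc)
    refine hI (eq_bot_iff.mpr fun e he => hz.right_eq_zero_of_smul ?_)
    rw [ha0, zero_add, smul_eq_mul, mul_comm, hmul he hb]

end DepthGE

theorem length_le_height_maximalIdeal {R : Type u} [CommRing R] [IsLocalRing R]
    [IsNoetherianRing R] {rs : List R} (h : IsRegular R rs) :
    rs.length ≤ (maximalIdeal R).height := by
  have : Nontrivial (R ⧸ Ideal.ofList rs) := by
    rw [Ideal.Quotient.nontrivial_iff]
    rintro he
    exact h.2 (by rw [he, Submodule.top_smul])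
  rw [← WithBot.coe_le_coe, maximalIdeal_height_eq_ringKrullDim,
    ← ringKrullDim_add_length_eq_ringKrullDim_of_isRegular rs h]
  exact le_add_of_nonneg_left ringKrullDim_nonneg_of_nontrivial

theorem DepthGE.iff_le_depthIn {R : Type} [CommRing R] [IsLocalRing R] [IsNoetherianRing R]
    {n : ℕ} : DepthGE R R n ↔ n ≤ depthIn R (maximalIdeal R) := by
  let s := {n : ℕ | ∃ rs : List R, rs.length = n ∧ (∀ r ∈ rs, r ∈ maximalIdeal R) ∧
    IsRegular R rs}
  have hbdd : BddAbove s := by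
    obtain ⟨d, hd⟩ := ENat.ne_top_iff_exists.mp
      (Ideal.height_ne_top_of_isPrime (I := maximalIdeal R))
    refine ⟨d, ?_⟩
    rintro _ ⟨rs, rfl, -, h⟩
    exact Nat.cast_le.mp (hd ▸ length_le_height_maximalIdeal h)
  constructor
  · intro h
    exact le_csSup hbdd h.exists_isRegular
  · intro h
    obtain ⟨rs, hl, hm, hr⟩ := Nat.sSup_mem (s := s)
      ⟨0, [], rfl, List.forall_mem_nil _, .nil R R⟩ hbdd
    exact (of_isWeaklyRegular hm hr.1).mono (h.trans_eq hl.symm)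

end Depth

theorem serreCondS_iff {A : Type} [CommRing A] [IsNoetherianRing A] {ℓ : ℕ} :
    SerreCondS ℓ A ↔ ∀ (p : Ideal A) [p.IsPrime] (n : ℕ), n ≤ ℓ → n ≤ p.height →
      DepthGE (Localization.AtPrime p) (Localization.AtPrime p) n := by
  refine forall₂_congr fun p hp => ?_
  rw [IsLocalization.AtPrime.ringKrullDim_eq_height p, ← WithBot.coe_min, WithBot.coe_le_coe,
    ← ENat.forall_natCast_le_iff_le]
  simp only [le_min_iff, Nat.cast_le, DepthGE.iff_le_depthIn, and_imp]

/-! ### Quotients by orthogonal elements of reduced rings -/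

section Surjection

variable {A B : Type u} [CommRing A] [CommRing B] {f : A →+* B}

theorem ker_localRingHom_of_surjective (hf : Function.Surjective f) (Q : Ideal A) [Q.IsPrime]
    (P : Ideal B) [P.IsPrime] (hQ : Q = P.comap f) :
    RingHom.ker (Localization.localRingHom Q P f hQ) =
      (RingHom.ker f).map (algebraMap A (Localization.AtPrime Q)) := by
  subst hQ
  exact IsLocalization.ker_map (M := (P.comap f).primeCompl) (Localization.AtPrime P) f
    (Submonoid.map_comap_eq_of_surjective hf P.primeCompl)

variable [IsNoetherianRing A] {n : ℕ}

theorem depthGE_quotient_map_ker_iff (hf : Function.Surjective f) (Q : Ideal A) [Q.IsPrime]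
    (P : Ideal B) [P.IsPrime] (hQ : Q = P.comap f) :
    DepthGE (Localization.AtPrime Q)
      (Localization.AtPrime Q ⧸ (RingHom.ker f).map (algebraMap A (Localization.AtPrime Q))) n ↔
    DepthGE (Localization.AtPrime P) (Localization.AtPrime P) n := by
  have := isNoetherianRing_of_surjective A B f hf
  let _ := (Localization.localRingHom Q P f hQ).toAlgebra
  have hs : Function.Surjective (algebraMap (Localization.AtPrime Q) (Localization.AtPrime P)) := by
    subst hQ
    exact RingHom.surjective_localRingHom_of_surjective f hf P
  rw [← ker_localRingHom_of_surjective hf Q P hQ]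
  exact DepthGE.quotient_ker_iff hs

theorem depthGE_quotient_map_ker (hf : Function.Surjective f) (Q : Ideal A) [Q.IsPrime]
    (h : ∀ (P : Ideal B) [P.IsPrime], Q = P.comap f →
      DepthGE (Localization.AtPrime P) (Localization.AtPrime P) n) :
    DepthGE (Localization.AtPrime Q)
      (Localization.AtPrime Q ⧸ (RingHom.ker f).map (algebraMap A (Localization.AtPrime Q))) n := by
  by_cases hQ : RingHom.ker f ≤ Q
  · have : (Q.map f).IsPrime := Ideal.map_isPrime_of_surjective hf hQ
    have hQf : Q = (Q.map f).comap f := by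
      rw [Ideal.comap_map_of_surjective' _ hf, sup_eq_left.mpr hQ]
    exact (depthGE_quotient_map_ker_iff hf Q (Q.map f) hQf).mpr (h _ hQf)
  · obtain ⟨t, ht, htQ⟩ := SetLike.not_le_iff_exists.mp hQ
    have : Subsingleton (Localization.AtPrime Q ⧸
        (RingHom.ker f).map (algebraMap A (Localization.AtPrime Q))) :=
      Ideal.Quotient.subsingleton_iff.mpr (Ideal.eq_top_of_isUnit_mem _
        (Ideal.mem_map_of_mem _ ht) (IsLocalization.map_units _ (⟨t, htQ⟩ : Q.primeCompl)))
    exact .of_subsingleton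

end Surjection

theorem torsionOf_algebraMap {A S : Type*} [CommRing A] [CommRing S] [Algebra A S]
    (M : Submonoid A) [IsLocalization M S] (x : A) :
    Ideal.torsionOf S S (algebraMap A S x) = (Ideal.torsionOf A A x).map (algebraMap A S) := by
  ext r
  obtain ⟨a, s, rfl⟩ := IsLocalization.exists_mk'_eq M r
  rw [IsLocalization.mk'_mem_map_algebraMap_iff, Ideal.mem_torsionOf_iff, smul_eq_mul, mul_comm,
    IsLocalization.mul_mk'_eq_mk'_of_mul, IsLocalization.mk'_eq_zero_iff]
  simp only [Ideal.mem_torsionOf_iff, smul_eq_mul, mul_assoc, mul_comm x, Subtype.exists,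
    exists_prop]

section Reduced

open IsLocalRing

variable {R : Type u} [CommRing R] [IsLocalRing R] {n : ℕ}

theorem DepthGE.quotient_sup {I L : Ideal R} (hd : Disjoint L I) (hL : DepthGE R L (n + 1))
    (hI : DepthGE R (R ⧸ I) n) : DepthGE R (R ⧸ (L ⊔ I)) n := by
  refine of_exact (f := I.mkQ.comp L.subtype) (g := Submodule.factor le_sup_right) ?_
    (Submodule.factor_surjective _) ?_ hL hI
  · rw [← LinearMap.ker_eq_bot, LinearMap.ker_comp, Submodule.ker_mkQ]
    exact Submodule.disjoint_iff_comap_eq_bot.mp hd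
  · rw [LinearMap.exact_iff, Submodule.factor, Submodule.ker_mapQ, LinearMap.range_comp,
      Submodule.range_subtype, Submodule.comap_id, Submodule.map_sup, Submodule.mkQ_map_self,
      sup_bot_eq]

variable [IsReduced R]

theorem DepthGE.one_of_isReduced [IsNoetherianRing R] (hR : maximalIdeal R ≠ ⊥) :
    DepthGE R R 1 := by
  rw [one_iff]
  intro u hu
  by_cases hum : u ∈ maximalIdeal R
  · exact IsReduced.eq_zero _ ⟨2, (sq u).trans (hu u hum)⟩
  · refine absurd (eq_bot_iff.mpr fun a ha => ?_) hR
    exact (notMem_maximalIdeal.mp hum).mul_left_eq_zero.mp (hu a ha)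

theorem DepthGE.span_singleton [IsNoetherianRing R] {y : R} (hy : y ∈ maximalIdeal R)
    (h : DepthGE R (R ⧸ (Ideal.torsionOf R R y ⊔ Ideal.span {y})) n) :
    DepthGE R (Ideal.span {y}) (n + 1) := by
  let e : (R ⧸ (Ideal.torsionOf R R y ⊔ Ideal.span {y})) ≃ₗ[R]
      QuotSMulTop y (R ⧸ Ideal.torsionOf R R y) :=
    (Submodule.quotientQuotientEquivQuotientSup _ _).symm.trans
      (Submodule.quotEquivOfEq _ _ (by
        rw [← Ideal.mul_top (Ideal.span {y}), ← smul_eq_mul, Submodule.ideal_span_singleton_smul,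
          Submodule.map_pointwise_smul, Submodule.map_top, Submodule.range_mkQ]))
  refine congr (Ideal.quotTorsionOfEquivSpanSingleton R R y)
    (succ_of_quotSMulTop hy (isSMulRegular_iff_right_eq_zero_of_smul.mpr ?_) (h.congr e))
  refine (Submodule.Quotient.mk_surjective _).forall.mpr fun r hr => ?_
  rw [← Submodule.Quotient.mk_smul, Submodule.Quotient.mk_eq_zero, Ideal.mem_torsionOf_iff,
    smul_eq_mul, smul_eq_mul] at hr
  rw [Submodule.Quotient.mk_eq_zero, Ideal.mem_torsionOf_iff, smul_eq_mul]
  exact IsReduced.eq_zero _ ⟨2, by linear_combination r * hr⟩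

theorem disjoint_span_singleton_of_mul_eq_zero {R : Type*} [CommRing R] [IsReduced R] {y : R}
    {I : Ideal R} (h : ∀ z ∈ I, y * z = 0) : Disjoint (Ideal.span {y}) I := by
  rw [Submodule.disjoint_def]
  intro z hz hzI
  obtain ⟨r, rfl⟩ := Ideal.mem_span_singleton'.mp hz
  exact IsReduced.eq_zero _ ⟨2, by linear_combination r * h _ hzI⟩

theorem DepthGE.quotient_span_image {ι : Type*} (y : ι → R) (J : Finset ι)
    (horth : ∀ i ∈ J, ∀ j ∈ J, i ≠ j → y i * y j = 0)
    (hspan : ∀ i ∈ J, DepthGE R (Ideal.span {y i}) (n + 1)) (hR : DepthGE R R n) :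
    DepthGE R (R ⧸ Ideal.span (y '' J)) n := by
  classical
  induction J using Finset.induction_on with
  | empty => exact hR.congr (Submodule.quotEquivOfEqBot _ (by simp)).symm
  | insert j J hj ih =>
    simp only [Finset.forall_mem_insert] at horth hspan
    rw [coe_insert, Set.image_insert_eq, Ideal.span_insert]
    refine quotient_sup (disjoint_span_singleton_of_mul_eq_zero fun z hz => ?_) hspan.1
      (ih (fun a ha b hb => (horth.2 a ha).2 b hb) hspan.2)
    have : Ideal.span (y '' J) ≤ Ideal.torsionOf R R (y j) := by
      rw [Ideal.span_le]
      rintro _ ⟨i, hi, rfl⟩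
      exact (horth.2 i hi).1 (by rintro rfl; exact hj hi)
    rw [mul_comm]
    exact this hz

end Reduced

section Orthogonal

variable {A B : Type u} [CommRing A] [IsNoetherianRing A] [IsReduced A] [CommRing B] {n : ℕ}

theorem depthGE_one_of_isReduced {P : Ideal A} [P.IsPrime] (hP : 1 ≤ P.height) :
    DepthGE (Localization.AtPrime P) (Localization.AtPrime P) 1 := by
  refine .one_of_isReduced fun h => ?_
  have : (IsLocalRing.maximalIdeal (Localization.AtPrime P)).height = P.height := by
    rw [← WithBot.coe_inj, IsLocalRing.maximalIdeal_height_eq_ringKrullDim,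
      IsLocalization.AtPrime.ringKrullDim_eq_height P]
  rw [h, Ideal.height_bot] at this
  exact absurd (this ▸ hP) (by simp)

theorem depthGE_of_ker_eq_span_image {f : A →+* B} (hf : Function.Surjective f) {ι : Type*}
    {x : ι → A} {J : Finset ι} (hker : RingHom.ker f = Ideal.span (x '' J))
    (horth : ∀ i ∈ J, ∀ j ∈ J, i ≠ j → x i * x j = 0)
    (Q : Ideal A) [Q.IsPrime] (P : Ideal B) [P.IsPrime] (hQ : Q = P.comap f)
    (hA : DepthGE (Localization.AtPrime Q) (Localization.AtPrime Q) n)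
    (hx : ∀ i ∈ J, DepthGE (Localization.AtPrime Q) (Localization.AtPrime Q ⧸
      (Ideal.torsionOf A A (x i) ⊔ Ideal.span {x i}).map
        (algebraMap A (Localization.AtPrime Q))) n) :
    DepthGE (Localization.AtPrime P) (Localization.AtPrime P) n := by
  rw [← depthGE_quotient_map_ker_iff hf Q P hQ, hker, Ideal.map_span, ← Set.image_comp]
  refine .quotient_span_image _ J (fun i hi j hj hij => ?_) (fun i hi => .span_singleton ?_ ?_) hA
  · rw [Function.comp_apply, Function.comp_apply, ← map_mul, horth i hi j hj hij, map_zero]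
  · have hxi : x i ∈ RingHom.ker f := hker ▸ Ideal.subset_span (Set.mem_image_of_mem x hi)
    rw [← Localization.AtPrime.map_eq_maximalIdeal]
    exact Ideal.mem_map_of_mem _ (hQ ▸ Ideal.ker_le_comap f hxi)
  · have := hx i hi
    rwa [Ideal.map_sup, Ideal.map_span, Set.image_singleton,
      ← torsionOf_algebraMap Q.primeCompl] at this

end Orthogonal

/-! ### Heights of primes and descent from polynomial rings -/

section Height

open PrimeSpectrum

theorem height_le_height_comap_of_surjective {A B : Type*} [CommRing A] [CommRing B] {f : A →+* B}
    (hf : Function.Surjective f) (P : Ideal B) [hP : P.IsPrime] :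
    P.height ≤ (P.comap f).height := by
  have h := Order.height_le_height_apply_of_strictMono _
    (RingHom.strictMono_comap_of_surjective hf) ⟨P, hP⟩
  rwa [← height_eq_orderHeight, ← height_eq_orderHeight] at h

theorem exists_isPrime_height_le_height_map_mk {B : Type*} [CommRing B] [IsNoetherianRing B]
    (P : Ideal B) [hP : P.IsPrime] :
    ∃ q ≤ P, q.IsPrime ∧ P.height ≤ (P.map (Ideal.Quotient.mk q)).height := by
  obtain ⟨l, hl, hlen⟩ := P.exists_ltSeries_length_eq_height
  let q := l.head.asIdeal
  have hcomap (i) : ((l i).asIdeal.map (Ideal.Quotient.mk q)).comap (Ideal.Quotient.mk q) =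
      (l i).asIdeal := Ideal.comap_map_mk (l.head_le i)
  let l' : LTSeries (PrimeSpectrum (B ⧸ q)) :=
    { length := l.length
      toFun := fun i => ⟨_, Ideal.isPrime_map_quotientMk_of_isPrime (l.head_le i)⟩
      step := fun i => lt_of_le_of_ne (Ideal.map_mono (l.step i).le) fun h => (l.step i).ne
        (PrimeSpectrum.ext (by rw [← hcomap, h, hcomap])) }
  have hlast : l.last.asIdeal = P := congrArg PrimeSpectrum.asIdeal hl
  refine ⟨q, hlast ▸ l.head_le_last, l.head.isPrime, ?_⟩
  rw [← hlen, ← hlast]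
  exact (Order.length_le_height_last (p := l')).trans_eq (height_eq_orderHeight _).symm

end Height

section Descent

variable {A B : Type u} [CommRing A] [CommRing B] [IsNoetherianRing A] {n : ℕ}

theorem depthGE_of_mul_ker_eq_zero {f : A →+* B} (hf : Function.Surjective f) {t : A}
    (ht : ∀ a, f a = 0 → t * a = 0) (Q : Ideal A) [Q.IsPrime] (P : Ideal B) [P.IsPrime]
    (hQ : Q = P.comap f) (htQ : t ∉ Q)
    (h : DepthGE (Localization.AtPrime Q) (Localization.AtPrime Q) n) :
    DepthGE (Localization.AtPrime P) (Localization.AtPrime P) n := by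
  rw [← depthGE_quotient_map_ker_iff hf Q P hQ]
  refine h.congr (Submodule.quotEquivOfEqBot _ ?_).symm
  rw [Ideal.map_eq_bot_iff_le_ker]
  intro a ha
  rw [RingHom.mem_ker, IsLocalization.map_eq_zero_iff Q.primeCompl]
  exact ⟨⟨t, htQ⟩, ht a ha⟩

theorem depthGE_of_flat [IsNoetherianRing B] [Algebra A B] [Module.Flat A B] (P : Ideal A)
    [P.IsPrime] (Q : Ideal B) [Q.IsPrime] [Q.LiesOver P] (hQ : P.map (algebraMap A B) = Q)
    (h : DepthGE (Localization.AtPrime Q) (Localization.AtPrime Q) n) :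
    DepthGE (Localization.AtPrime P) (Localization.AtPrime P) n := by
  have hP : P = Q.comap (algebraMap A B) := Q.over_def P
  let g := Localization.localRingHom P Q (algebraMap A B) hP
  let _ := g.toAlgebra
  have : Module.Flat (Localization.AtPrime P) (Localization.AtPrime Q) :=
    RingHom.Flat.localRingHom (RingHom.flat_algebraMap_iff.mpr inferInstance) Q P hP
  have : IsLocalHom (algebraMap (Localization.AtPrime P) (Localization.AtPrime Q)) :=
    Localization.isLocalHom_localRingHom _ _ _ hP
  have hcomp : (algebraMap (Localization.AtPrime P) (Localization.AtPrime Q)).comp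
      (algebraMap A (Localization.AtPrime P)) =
      (algebraMap B (Localization.AtPrime Q)).comp (algebraMap A B) :=
    RingHom.ext fun a => Localization.localRingHom_to_map P Q _ hP a
  refine DepthGE.of_flat (S := Localization.AtPrime Q) ?_ h
  rw [← Localization.AtPrime.map_eq_maximalIdeal, ← Localization.AtPrime.map_eq_maximalIdeal,
    Ideal.map_map, hcomp, ← Ideal.map_map, hQ]

open Polynomial in
theorem SerreCondS.of_surjective_polynomial {A C : Type} [CommRing A] [IsNoetherianRing A]
    [CommRing C] [IsNoetherianRing C] {ψ : A →+* C[X]} (hψ : Function.Surjective ψ) {x : A}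
    (hx : ψ x = X) (hker : ∀ a, ψ a = 0 → x * a = 0) {ℓ : ℕ} (h : SerreCondS ℓ A) :
    SerreCondS ℓ C := by
  refine serreCondS_iff.mpr fun P _ n hnℓ hnP => ?_
  let Q : Ideal C[X] := P.map Polynomial.C
  have hQ : Q.IsPrime := Ideal.isPrime_map_C_of_isPrime
  have hover : Q.LiesOver P := ⟨Ideal.ext fun c => by
    refine ⟨Ideal.mem_map_of_mem _, fun hc => ?_⟩
    simpa using Ideal.mem_map_C_iff.mp hc 0⟩
  have hXQ : X ∉ Q := fun hX => by
    have := Ideal.mem_map_C_iff.mp hX 1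
    rw [coeff_X_one] at this
    exact (Ideal.ne_top_iff_one P).mp Ideal.IsPrime.ne_top' this
  have hPQ : P.height ≤ Q.height := by
    have := Ideal.height_eq_height_add_of_liesOver_of_hasGoingDown P Q
    exact this ▸ le_self_add
  refine depthGE_of_flat P Q rfl
    (depthGE_of_mul_ker_eq_zero hψ hker (Q.comap ψ) Q rfl (by rwa [Ideal.mem_comap, hx]) ?_)
  exact serreCondS_iff.mp h _ n hnℓ
    (hnP.trans (hPQ.trans (height_le_height_comap_of_surjective hψ Q)))

end Descent

/-! ### Stanley–Reisner rings and their face primes -/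

section MonomialIdeal

open MvPolynomial

variable {σ R : Type*} [CommRing R]

theorem isPrime_span_X_image [IsDomain R] (s : Set σ) :
    (Ideal.span (X '' s : Set (MvPolynomial σ R))).IsPrime := by
  let f : MvPolynomial σ R →ₐ[R] MvPolynomial ↥sᶜ R := killCompl Subtype.val_injective
  suffices Ideal.span (X '' s) = RingHom.ker f from this ▸ RingHom.ker_isPrime f
  ext p
  rw [mem_ideal_span_X_image, RingHom.mem_ker, MvPolynomial.ext_iff]
  simp only [f, coeff_killCompl, coeff_zero]
  refine ⟨fun h m => ?_, fun h m hm => ?_⟩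
  · by_contra hm
    obtain ⟨i, hi, hmi⟩ := h _ (mem_support_iff.mpr hm)
    exact hmi (Finsupp.mapDomain_of_notMem_range _ _ fun ⟨j, hj⟩ => j.2 (hj ▸ hi))
  · by_contra! hs
    have hms : (m.support : Set σ) ⊆ Set.range ((↑) : ↥sᶜ → σ) := fun i hi =>
      ⟨⟨i, fun his => Finsupp.mem_support_iff.mp hi (hs i his)⟩, rfl⟩
    refine mem_support_iff.mp hm ?_
    rw [← Finsupp.mapDomain_comapDomain _ Subtype.val_injective m hms]
    exact h _

theorem X_mem_span_X_image_iff [Nontrivial R] {s : Set σ} {i : σ} :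
    (X i : MvPolynomial σ R) ∈ Ideal.span (X '' s) ↔ i ∈ s := by
  classical
  simp [mem_ideal_span_X_image, support_X, Finsupp.single_apply]

end MonomialIdeal

namespace SComplex

open MvPolynomial

variable {V : Type} [DecidableEq V] {k : Type} [Field k] {K : SComplex V}

theorem mem_srIdeal_iff {p : MvPolynomial V k} :
    p ∈ srIdeal k K ↔ ∀ m ∈ p.support, m.support ∉ K.faces := by
  have hspan : srIdeal k K = Ideal.span ((fun m => monomial m (1 : k)) ''
      ((fun s : Finset V => ∑ v ∈ s, Finsupp.single v 1) '' {s | s ∉ K.faces})) := by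
    simp only [srIdeal, Set.image_image, monomial_sum_one, X]
  have hle (s : Finset V) (m : V →₀ ℕ) : ∑ v ∈ s, Finsupp.single v 1 ≤ m ↔ s ⊆ m.support := by
    simp only [Finsupp.le_def, Finsupp.finsetSum_apply, Finsupp.single_apply, Finset.sum_ite_eq',
      Finset.subset_iff, Finsupp.mem_support_iff]
    refine forall_congr' fun v => ?_
    split_ifs with hv <;> simp [hv, Nat.one_le_iff_ne_zero]
  rw [hspan, mem_ideal_span_monomial_image]
  simp only [Set.exists_mem_image, hle]
  exact forall₂_congr fun m _ => ⟨fun ⟨s, hs, hsm⟩ hm => hs (K.down_closed hm hsm),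
    fun hm => ⟨_, hm, subset_rfl⟩⟩

theorem srIdeal_eq_iInf :
    srIdeal k K = ⨅ F ∈ K.faces, Ideal.span (X '' (F : Set V)ᶜ) := by
  ext p
  simp only [mem_srIdeal_iff, Ideal.mem_iInf, mem_ideal_span_X_image]
  refine ⟨fun h F hF m hm => ?_, fun h m hm hmK => ?_⟩
  · obtain ⟨v, hv, hvF⟩ := Finset.not_subset.mp fun hmF => h m hm (K.down_closed hF hmF)
    exact ⟨v, hvF, Finsupp.mem_support_iff.mp hv⟩
  · obtain ⟨v, hv, hvm⟩ := h _ hmK m hm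
    exact hv (Finsupp.mem_support_iff.mpr hvm)

theorem srIdeal_le_span_X_image {F : Finset V} (hF : F ∈ K.faces) :
    srIdeal k K ≤ Ideal.span (X '' (F : Set V)ᶜ) :=
  srIdeal_eq_iInf.trans_le (iInf₂_le F hF)

instance : IsReduced (SRRing k K) := by
  rw [← Ideal.isRadical_iff_quotient_reduced, srIdeal_eq_iInf]
  exact Ideal.isRadical_iInf _ fun F => Ideal.isRadical_iInf _ fun _ =>
    (isPrime_span_X_image _).isRadical

variable (k K) in
/-- The class of the variable `v` in the Stanley–Reisner ring. -/
noncomputable def srX (v : V) : SRRing k K := Ideal.Quotient.mk (srIdeal k K) (X v)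

theorem prod_srX_eq_zero {s : Finset V} (hs : s ∉ K.faces) : ∏ v ∈ s, srX k K v = 0 := by
  simp only [srX, ← map_prod]
  exact Ideal.Quotient.eq_zero_iff_mem.mpr (Ideal.subset_span ⟨s, hs, rfl⟩)

theorem srX_eq_zero {v : V} (hv : {v} ∉ K.faces) : srX k K v = 0 := by
  rw [← prod_singleton (srX k K) v, prod_srX_eq_zero hv]

theorem eq_top_of_srX_mem {S : Subalgebra k (SRRing k K)} (h : ∀ v, srX k K v ∈ S) : S = ⊤ := by
  rw [eq_top_iff, ← (AlgHom.range_eq_top _).mpr (Ideal.Quotient.mkₐ_surjective k (srIdeal k K)),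
    ← Algebra.map_top, ← adjoin_range_X, AlgHom.map_adjoin, Algebra.adjoin_le_iff, ← Set.range_comp]
  exact Set.range_subset_iff.mpr h

theorem srAlgHom_ext {B : Type*} [Semiring B] [Algebra k B] {f g : SRRing k K →ₐ[k] B}
    (h : ∀ v, f (srX k K v) = g (srX k K v)) : f = g :=
  Ideal.Quotient.algHom_ext k (MvPolynomial.algHom_ext h)

variable (K) in
/-- The algebra homomorphism out of a Stanley–Reisner ring determined by the images of the
variables. -/
noncomputable def srLift {B : Type*} [CommRing B] [Algebra k B] (x : V → B)
    (h : ∀ s ∉ K.faces, ∏ v ∈ s, x v = 0) : SRRing k K →ₐ[k] B :=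
  Ideal.Quotient.liftₐ (srIdeal k K) (aeval x) fun a ha => by
    suffices srIdeal k K ≤ RingHom.ker (aeval (R := k) x) from this ha
    rw [srIdeal, Ideal.span_le]
    rintro _ ⟨s, hs, rfl⟩
    simpa only [SetLike.mem_coe, RingHom.mem_ker, map_prod, aeval_X] using h s hs

@[simp]
theorem srLift_srX {B : Type*} [CommRing B] [Algebra k B] (x : V → B)
    (h : ∀ s ∉ K.faces, ∏ v ∈ s, x v = 0) (v : V) : srLift K x h (srX k K v) = x v :=
  aeval_X x v

instance : IsNoetherianRing (SRRing k K) := by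
  let W := K.faces.sup id
  let f : MvPolynomial W k →ₐ[k] SRRing k K := aeval fun w => srX k K w
  refine isNoetherianRing_of_surjective _ _ f.toRingHom
    ((AlgHom.range_eq_top f).mp (eq_top_of_srX_mem fun v => ?_))
  by_cases hv : v ∈ W
  · exact ⟨X ⟨v, hv⟩, aeval_X _ _⟩
  · rw [srX_eq_zero fun h => hv (Finset.mem_sup.mpr ⟨{v}, h, mem_singleton_self v⟩)]
    exact zero_mem _

theorem exists_face_forall_mem_iff (P : Ideal (SRRing k K)) [P.IsPrime] :
    ∃ F ∈ K.faces, ∀ v, v ∈ F ↔ srX k K v ∉ P := by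
  classical
  have hface (s : Finset V) (hs : ∀ v ∈ s, srX k K v ∉ P) : s ∈ K.faces := by
    by_contra hsK
    obtain ⟨v, hv, hvP⟩ := Ideal.IsPrime.prod_mem_iff.mp
      (prod_srX_eq_zero (k := k) hsK ▸ P.zero_mem)
    exact hs v hv hvP
  let F := (K.faces.sup id).filter fun v => srX k K v ∉ P
  refine ⟨F, hface F fun v hv => (mem_filter.mp hv).2, fun v => ?_⟩
  rw [mem_filter, and_iff_right_iff_imp]
  exact fun hv => Finset.mem_sup.mpr ⟨{v}, hface _ (by simpa using hv), mem_singleton_self v⟩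

variable (k K) in
/-- The ideal of the Stanley–Reisner ring generated by the variables off `F`, a prime when `F`
is a face. -/
noncomputable def facePrime (F : Finset V) : Ideal (SRRing k K) :=
  Ideal.span (srX k K '' (F : Set V)ᶜ)

theorem facePrime_eq_map (F : Finset V) : facePrime k K F =
    (Ideal.span (X '' (F : Set V)ᶜ)).map (Ideal.Quotient.mk (srIdeal k K)) := by
  rw [Ideal.map_span, Set.image_image]
  rfl

theorem facePrime_isPrime {F : Finset V} (hF : F ∈ K.faces) : (facePrime k K F).IsPrime := by
  have := isPrime_span_X_image (R := k) (F : Set V)ᶜ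
  rw [facePrime_eq_map]
  exact Ideal.isPrime_map_quotientMk_of_isPrime (srIdeal_le_span_X_image hF)

theorem srX_mem_facePrime_iff {F : Finset V} (hF : F ∈ K.faces) {v : V} :
    srX k K v ∈ facePrime k K F ↔ v ∉ F := by
  rw [facePrime_eq_map, srX, Ideal.mem_quotient_iff_mem (srIdeal_le_span_X_image hF),
    X_mem_span_X_image_iff, Set.mem_compl_iff, mem_coe]

theorem facePrime_anti {F G : Finset V} (h : F ⊆ G) : facePrime k K G ≤ facePrime k K F :=
  Ideal.span_mono (Set.image_mono (Set.compl_subset_compl.mpr (coe_subset.mpr h)))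

theorem facePrime_lt_facePrime {F G : Finset V} (hG : G ∈ K.faces) (h : F ⊂ G) :
    facePrime k K G < facePrime k K F := by
  obtain ⟨v, hvG, hvF⟩ := Finset.exists_of_ssubset h
  exact SetLike.lt_iff_le_and_exists.mpr ⟨facePrime_anti h.1, srX k K v,
    (srX_mem_facePrime_iff (K.down_closed hG h.1)).mpr hvF,
    fun hv => (srX_mem_facePrime_iff hG).mp hv hvG⟩

end SComplex

/-! ### Anti-stars and links -/

namespace SComplex

open MvPolynomial

variable {V : Type} [DecidableEq V] {k : Type} [Field k] {K L : SComplex V} {J : Finset V} {j : V}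

variable (k) in
/-- The projection of Stanley–Reisner rings dual to the inclusion of a subcomplex. -/
noncomputable def srProj (h : L.faces ⊆ K.faces) : SRRing k K →ₐ[k] SRRing k L :=
  srLift K (srX k L) fun _ hs => prod_srX_eq_zero fun hsL => hs (h hsL)

@[simp]
theorem srProj_srX (h : L.faces ⊆ K.faces) (v : V) : srProj k h (srX k K v) = srX k L v :=
  srLift_srX ..

theorem srProj_surjective (h : L.faces ⊆ K.faces) : Function.Surjective (srProj k h) :=
  (AlgHom.range_eq_top _).mp (eq_top_of_srX_mem fun v => ⟨_, srProj_srX h v⟩)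

theorem antistar_faces_subset : (K.antistar J).faces ⊆ K.faces := filter_subset _ _

theorem mem_antistar_iff {s : Finset V} :
    s ∈ (K.antistar J).faces ↔ s ∈ K.faces ∧ Disjoint J s := mem_filter

theorem ker_srProj_antistar :
    RingHom.ker (srProj k (antistar_faces_subset (K := K) (J := J))) =
      Ideal.span (srX k K '' J) := by
  refine le_antisymm (fun a ha => ?_) (Ideal.span_le.mpr ?_)
  · let mk := Ideal.Quotient.mkₐ k (Ideal.span (srX k K '' J))
    have hmk {s : Finset V} (hs : s ∉ (K.antistar J).faces) : ∏ v ∈ s, mk (srX k K v) = 0 := by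
      rw [← map_prod]
      by_cases hsK : s ∈ K.faces
      · obtain ⟨v, hvJ, hvs⟩ := not_disjoint_iff.mp fun h => hs (mem_antistar_iff.mpr ⟨hsK, h⟩)
        exact Ideal.Quotient.eq_zero_iff_mem.mpr (Ideal.mem_of_dvd _ (dvd_prod_of_mem _ hvs)
          (Ideal.subset_span ⟨v, hvJ, rfl⟩))
      · rw [prod_srX_eq_zero hsK, map_zero]
    have hcomp : (srLift _ _ fun _ => hmk).comp (srProj k antistar_faces_subset) = mk :=
      srAlgHom_ext fun v => by simp
    rw [← Ideal.Quotient.eq_zero_iff_mem]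
    exact (DFunLike.congr_fun hcomp a).symm.trans (by
      rw [AlgHom.comp_apply, RingHom.mem_ker.mp ha, map_zero])
  · rintro _ ⟨v, hv, rfl⟩
    refine (srProj_srX _ v).trans (srX_eq_zero fun h => ?_)
    exact disjoint_left.mp (mem_antistar_iff.mp h).2 hv (mem_singleton_self v)

theorem link_faces_subset : (K.link J).faces ⊆ K.faces := filter_subset _ _

theorem mem_link_singleton_iff {s : Finset V} :
    s ∈ (K.link {j}).faces ↔ j ∉ s ∧ insert j s ∈ K.faces := by
  simp only [link, mem_filter, disjoint_singleton_left]
  exact ⟨fun h => h.2, fun h => ⟨K.down_closed h.2 (subset_insert _ _), h⟩⟩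

theorem srX_link_self : srX k (K.link {j}) j = 0 :=
  srX_eq_zero fun h => (mem_link_singleton_iff.mp h).1 (mem_singleton_self j)

variable (k K) in
/-- The map from the Stanley–Reisner ring of `K` to that of the star of `j`, a cone over the link
of `j`, whose Stanley–Reisner ring is presented as the polynomial ring in `x_j` over that of the
link. -/
noncomputable def starHom (j : V) : SRRing k K →ₐ[k] Polynomial (SRRing k (K.link {j})) :=
  srLift K (Function.update (fun v => Polynomial.C (srX k _ v)) j Polynomial.X) fun s hs => by
    by_cases hj : j ∈ s
    · have hlink : s \ {j} ∉ (K.link {j}).faces := fun h =>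
        hs (by simpa [sdiff_singleton_eq_erase, insert_erase hj] using
          (mem_link_singleton_iff.mp h).2)
      rw [prod_update_of_mem hj, ← map_prod, prod_srX_eq_zero hlink, map_zero, mul_zero]
    · have hlink : s ∉ (K.link {j}).faces := fun h => hs (link_faces_subset h)
      rw [prod_update_of_notMem hj, ← map_prod, prod_srX_eq_zero hlink, map_zero]

theorem starHom_self : starHom k K j (srX k K j) = Polynomial.X := by
  rw [starHom, srLift_srX, Function.update_self]

theorem starHom_of_ne {v : V} (hv : v ≠ j) :
    starHom k K j (srX k K v) = Polynomial.C (srX k _ v) := by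
  rw [starHom, srLift_srX, Function.update_of_ne hv]

theorem starHom_surjective : Function.Surjective (starHom k K j) := by
  have hC : (starHom k K j).range.comap Polynomial.CAlgHom = ⊤ := eq_top_of_srX_mem fun v => by
    rcases eq_or_ne v j with rfl | hv
    · rw [srX_link_self]
      exact zero_mem _
    · exact ⟨_, starHom_of_ne hv⟩
  suffices ∀ p, p ∈ (starHom k K j).range from this
  intro p
  induction p using Polynomial.induction_on' with
  | add p q hp hq => exact add_mem hp hq
  | monomial n a =>
    rw [← Polynomial.C_mul_X_pow_eq_monomial]
    have hX : Polynomial.X ∈ (starHom k K j).range := ⟨_, starHom_self⟩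
    exact mul_mem (hC ▸ Algebra.mem_top : a ∈ (starHom k K j).range.comap Polynomial.CAlgHom)
      (pow_mem hX n)

theorem srX_mul_eq_zero_of_starHom_eq_zero {a : SRRing k K} (ha : starHom k K j a = 0) :
    srX k K j * a = 0 := by
  let T := Ideal.torsionOf (SRRing k K) (SRRing k K) (srX k K j)
  let π : SRRing k K →ₐ[k] SRRing k K ⧸ T := Ideal.Quotient.mkₐ k T
  have hπ (b : SRRing k K) : π b = 0 ↔ srX k K j * b = 0 := by
    rw [mul_comm]
    exact Ideal.Quotient.eq_zero_iff_mem
  have hlink (s : Finset V) (hs : s ∉ (K.link {j}).faces) :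
      ∏ v ∈ s, Function.update (fun v => π (srX k K v)) j (π 0) v = 0 := by
    by_cases hj : j ∈ s
    · rw [prod_update_of_mem hj, ← map_prod, ← map_mul, hπ, zero_mul, mul_zero]
    · rw [prod_update_of_notMem hj, ← map_prod, hπ, ← prod_insert hj]
      exact prod_srX_eq_zero fun h => hs (mem_link_singleton_iff.mpr ⟨hj, h⟩)
  have hcomp : (Polynomial.aevalTower (srLift _ _ hlink) (π (srX k K j))).comp (starHom k K j) =
      π := srAlgHom_ext fun v => by
    rcases eq_or_ne v j with rfl | hv
    · simp [starHom_self]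
    · simp [starHom_of_ne hv, hv]
  rw [← hπ, ← hcomp, AlgHom.comp_apply, ha, map_zero]

theorem eval_zero_starHom (a : SRRing k K) :
    (starHom k K j a).eval 0 = srProj k link_faces_subset a := by
  have hcomp : (Polynomial.aevalTower (AlgHom.id k _) 0).comp (starHom k K j) =
      srProj k link_faces_subset := srAlgHom_ext fun v => by
    rcases eq_or_ne v j with rfl | hv
    · simp [starHom_self, srX_link_self]
    · simp [starHom_of_ne hv]
  exact DFunLike.congr_fun hcomp a

theorem ker_srProj_link :
    RingHom.ker (srProj k (link_faces_subset (K := K) (J := {j}))) =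
      Ideal.torsionOf (SRRing k K) (SRRing k K) (srX k K j) ⊔ Ideal.span {srX k K j} := by
  ext a
  rw [RingHom.mem_ker, ← eval_zero_starHom, ← Polynomial.coeff_zero_eq_eval_zero,
    ← Polynomial.X_dvd_iff, sup_comm, Ideal.mem_span_singleton_sup]
  constructor
  · rintro ⟨p, hp⟩
    obtain ⟨b, rfl⟩ := starHom_surjective p
    refine ⟨b, a - b * srX k K j, ?_, by ring⟩
    rw [Ideal.mem_torsionOf_iff, smul_eq_mul, mul_comm]
    refine srX_mul_eq_zero_of_starHom_eq_zero ?_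
    rw [map_sub, map_mul, starHom_self, hp]
    ring
  · rintro ⟨b, c, hc, rfl⟩
    have hstar : starHom k K j c = 0 := by
      refine Polynomial.mul_X_pow_eq_zero (n := 1) ?_
      rw [pow_one, ← starHom_self, ← map_mul, ← smul_eq_mul, (Ideal.mem_torsionOf_iff _ _).mp hc,
        map_zero]
    rw [map_add, map_mul, starHom_self, hstar, add_zero]
    exact Dvd.intro_left (starHom k K j b) rfl

theorem SerreS.link {ℓ : ℕ} (h : SerreS k ℓ K) : SerreS k ℓ (K.link {j}) :=
  SerreCondS.of_surjective_polynomial (ψ := (starHom k K j : SRRing k K →+* _))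
    starHom_surjective starHom_self (fun _ => srX_mul_eq_zero_of_starHom_eq_zero) h

end SComplex

/-! ### Comparison of heights -/

theorem exists_equiv_of_card_le {α : Type*} {s t u : Finset α} (hst : s ⊆ t) (hsu : s ⊆ u)
    (h : #t ≤ #u) : ∃ r, s ⊆ r ∧ r ⊆ u ∧ ∃ e : r ≃ t, ∀ a : r, ↑a ∈ s → (e a : α) = a := by
  obtain ⟨r, hsr, hru, hr⟩ := exists_subsuperset_card_eq hsu (card_le_card hst) h
  have hmaps : Set.MapsTo ((↑) : r → α) {a | ↑a ∈ s} t := fun _ ha => hst ha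
  exact ⟨r, hsr, hru, hmaps.exists_equiv_extend_of_card_eq ((Fintype.card_coe r).trans hr)
    Subtype.val_injective.injOn⟩

namespace SComplex

variable {V : Type} [DecidableEq V] {k : Type} [Field k] {K L L' : SComplex V}

theorem exists_surjective_algHom_of_equiv {q : Ideal (SRRing k L)} {E G : Finset V}
    (hE : E ∈ L'.faces) (hq : ∀ v ∉ G, srX k L v ∈ q) (e : E ≃ G) :
    ∃ φ : SRRing k L' →ₐ[k] SRRing k L ⧸ q, Function.Surjective φ ∧
      (∀ v (hv : v ∈ E), φ (srX k L' v) = Ideal.Quotient.mk q (srX k L (e ⟨v, hv⟩))) ∧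
      ∀ v ∉ E, φ (srX k L' v) = 0 := by
  let x (v : V) : SRRing k L := if hv : v ∈ E then srX k L (e ⟨v, hv⟩) else 0
  have hx {v : V} (hv : v ∉ E) : x v = 0 := dif_neg hv
  let φ : SRRing k L' →ₐ[k] SRRing k L ⧸ q :=
    srLift L' (fun v => Ideal.Quotient.mk q (x v)) fun s hs => by
      obtain ⟨v, hvs, hvE⟩ := not_subset.mp fun hsE => hs (L'.down_closed hE hsE)
      rw [← map_prod, prod_eq_zero hvs (hx hvE), map_zero]
  have hφ (v : V) : φ (srX k L' v) = Ideal.Quotient.mk q (x v) := srLift_srX ..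
  have hrange : φ.range.comap (Ideal.Quotient.mkₐ k q) = ⊤ := eq_top_of_srX_mem fun w => by
    rw [Subalgebra.mem_comap, Ideal.Quotient.mkₐ_eq_mk]
    by_cases hw : w ∈ G
    · exact ⟨srX k L' (e.symm ⟨w, hw⟩), by simp [hφ, x]⟩
    · rw [Ideal.Quotient.eq_zero_iff_mem.mpr (hq w hw)]
      exact zero_mem _
  refine ⟨φ, fun b => ?_, fun v hv => (hφ v).trans (congrArg _ (dif_pos hv)),
    fun v hv => by rw [hφ, hx hv, map_zero]⟩
  obtain ⟨a, rfl⟩ := Ideal.Quotient.mk_surjective b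
  exact (hrange ▸ Algebra.mem_top : a ∈ φ.range.comap (Ideal.Quotient.mkₐ k q))

-- Vertices outside `F` give elements of `P` on both sides, so relabelling them along `e` is
-- invisible modulo `P`.
theorem exists_surjective_algHom_sub_mem_map {q P : Ideal (SRRing k L)} {F E G : Finset V}
    (hE : E ∈ L'.faces) (hq : ∀ v ∉ G, srX k L v ∈ q) (hP : ∀ v ∉ F, srX k L v ∈ P) (hFE : F ⊆ E)
    (e : E ≃ G) (he : ∀ v : E, ↑v ∈ F → (e v : V) = v) :
    ∃ φ : SRRing k L' →ₐ[k] SRRing k L ⧸ q, Function.Surjective φ ∧ ∀ v,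
      φ (srX k L' v) - Ideal.Quotient.mk q (srX k L v) ∈ P.map (Ideal.Quotient.mk q) := by
  obtain ⟨φ, hφ, hφE, hφ0⟩ := exists_surjective_algHom_of_equiv hE hq e
  refine ⟨φ, hφ, fun v => ?_⟩
  by_cases hvF : v ∈ F
  · rw [hφE v (hFE hvF), he ⟨v, hFE hvF⟩ hvF, sub_self]
    exact zero_mem _
  have hvP {w : V} (hw : w ∉ F) :
      Ideal.Quotient.mk q (srX k L w) ∈ P.map (Ideal.Quotient.mk q) :=
    Ideal.mem_map_of_mem _ (hP w hw)
  refine sub_mem ?_ (hvP hvF)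
  by_cases hvE : v ∈ E
  · rw [hφE v hvE]
    refine hvP fun hevF => hvF ?_
    have hfix : e ⟨_, hFE hevF⟩ = e ⟨v, hvE⟩ := Subtype.ext (he ⟨_, hFE hevF⟩ hevF)
    rwa [Subtype.mk.inj (e.injective hfix)] at hevF
  · rw [hφ0 v hvE]
    exact zero_mem _

theorem comap_eq_comap_of_srX_sub_mem {B : Type*} [CommRing B] [Algebra k B]
    {f g : SRRing k K →ₐ[k] B} {I : Ideal B} (h : ∀ v, f (srX k K v) - g (srX k K v) ∈ I) :
    I.comap f = I.comap g := by
  have hfg : (Ideal.Quotient.mkₐ k I).comp f = (Ideal.Quotient.mkₐ k I).comp g :=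
    srAlgHom_ext fun v => Ideal.Quotient.eq.mpr (h v)
  ext a
  rw [Ideal.mem_comap, Ideal.mem_comap, ← Ideal.Quotient.eq_zero_iff_mem,
    ← Ideal.Quotient.eq_zero_iff_mem]
  exact iff_of_eq (congrArg (· = 0) (DFunLike.congr_fun hfg a))

theorem height_le_height_of_comap_srProj_eq (hL : L.faces ⊆ K.faces) (hL' : L'.faces ⊆ K.faces)
    (h : ∀ F ∈ L'.faces, ∀ G ∈ L.faces, F ⊆ G → ∃ G' ∈ L'.faces, F ⊆ G' ∧ #G ≤ #G')
    (P : Ideal (SRRing k L)) [P.IsPrime] (P' : Ideal (SRRing k L')) [P'.IsPrime]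
    (hP : P.comap (srProj k hL) = P'.comap (srProj k hL')) : P.height ≤ P'.height := by
  obtain ⟨q, hqP, hq, hheight⟩ := exists_isPrime_height_le_height_map_mk P
  obtain ⟨G, hG, hGq⟩ := exists_face_forall_mem_iff q
  obtain ⟨F, hF, hFP'⟩ := exists_face_forall_mem_iff P'
  have hFP (v : V) : v ∈ F ↔ srX k L v ∉ P := by
    rw [hFP', ← srProj_srX hL', ← srProj_srX hL, ← Ideal.mem_comap, ← Ideal.mem_comap, hP]
  have hFG : F ⊆ G := fun v hv => (hGq v).mpr fun hvq => (hFP v).mp hv (hqP hvq)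
  obtain ⟨G', hG', hFG', hcard⟩ := h F hF G hG hFG
  obtain ⟨E, hFE, hEG', e, he⟩ := exists_equiv_of_card_le hFG hFG' hcard
  obtain ⟨φ, hφ, hmem⟩ := exists_surjective_algHom_sub_mem_map (L'.down_closed hG' hEG')
    (fun v hv => not_not.mp (mt (hGq v).mpr hv)) (fun v hv => not_not.mp (mt (hFP v).mpr hv)) hFE
    e he
  have hcomap : (P.map (Ideal.Quotient.mk q)).comap φ = P' := by
    refine Ideal.comap_injective_of_surjective (srProj k hL') (srProj_surjective hL') ?_
    have hcongr := comap_eq_comap_of_srX_sub_mem (f := φ.comp (srProj k hL'))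
      (g := (Ideal.Quotient.mkₐ k q).comp (srProj k hL)) fun v => by simpa using hmem v
    rw [← hP, Ideal.comap_comapₐ, hcongr, ← Ideal.comap_comapₐ]
    exact congrArg (Ideal.comap _) (Ideal.comap_map_mk hqP)
  have := Ideal.isPrime_map_quotientMk_of_isPrime hqP
  rw [← hcomap]
  exact hheight.trans (height_le_height_comap_of_surjective (f := φ.toRingHom) hφ _)

end SComplex

/-! ### Purity -/

namespace SComplex

variable {V : Type} [DecidableEq V] {k : Type} [Field k] {K : SComplex V} {J F : Finset V} {j : V}
  {ℓ : ℕ}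

theorem exists_isFacet_superset (hF : F ∈ K.faces) : ∃ H, K.IsFacet H ∧ F ⊆ H := by
  obtain ⟨H, hFH, hH⟩ := K.faces.exists_le_maximal hF
  exact ⟨H, ⟨hH.1, fun G hG hHG => hHG.antisymm (hH.2 hG hHG)⟩, hFH⟩

theorem IsFacet.exists_mem_notMem {H H' : Finset V} (hH : K.IsFacet H) (hH' : K.IsFacet H')
    (hne : H ≠ H') (hF : F ⊆ H') : ∃ v ∈ H, v ∉ F :=
  not_subset.mp fun hHF => hne (hH.2 H' hH'.1 (hHF.trans hF))

theorem exists_isFacet_card_ne (hK : ¬K.Pure) :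
    ∃ H H', K.IsFacet H ∧ K.IsFacet H' ∧ #H ≠ #H' := by
  simp only [Pure, not_forall] at hK
  obtain ⟨H, hH, hcard⟩ := hK
  obtain ⟨G, hG, hrank⟩ := K.faces.exists_mem_eq_sup ⟨H, hH.1⟩ card
  obtain ⟨H', hH', hGH'⟩ := exists_isFacet_superset hG
  have hHrank : #H < K.rank := lt_of_le_of_ne (le_sup (f := card) hH.1) hcard
  exact ⟨H, H', hH, hH', (hHrank.trans_le (hrank.trans_le (card_le_card hGH'))).ne⟩

theorem exists_subset_isFacet_card_ne_forall_insert (hK : ¬K.Pure) :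
    ∃ F H H', (K.IsFacet H ∧ F ⊆ H) ∧ (K.IsFacet H' ∧ F ⊆ H') ∧ #H ≠ #H' ∧ ∀ v ∉ F, ∀ E E',
      K.IsFacet E → K.IsFacet E' → insert v F ⊆ E → insert v F ⊆ E' → #E = #E' := by
  classical
  let p (F : Finset V) : Prop := ∃ H H', (K.IsFacet H ∧ F ⊆ H) ∧ (K.IsFacet H' ∧ F ⊆ H') ∧ #H ≠ #H'
  have hp : (K.faces.filter p).Nonempty := by
    obtain ⟨H, H', hH, hH', hne⟩ := exists_isFacet_card_ne hK
    exact ⟨∅, mem_filter.mpr ⟨K.down_closed hH.1 (empty_subset H),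
      H, H', ⟨hH, empty_subset H⟩, ⟨hH', empty_subset H'⟩, hne⟩⟩
  obtain ⟨F, hF⟩ := (K.faces.filter p).exists_maximal hp
  obtain ⟨H, H', hH, hH', hne⟩ := (mem_filter.mp hF.1).2
  refine ⟨F, H, H', hH, hH', hne, fun v hv E E' hE hE' hvE hvE' => ?_⟩
  by_contra hEE'
  have hmem : insert v F ∈ K.faces.filter p :=
    mem_filter.mpr ⟨K.down_closed hE.1 hvE, E, E', ⟨hE, hvE⟩, ⟨hE', hvE'⟩, hEE'⟩
  exact hv (hF.2 hmem (subset_insert v F) (mem_insert_self v F))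

theorem exists_link_disconnected_of_not_pure (hK : ¬K.Pure) :
    ∃ F ∈ K.faces, (∃ G ∈ K.faces, F ⊆ G ∧ #F + 2 ≤ #G) ∧ ∃ U U' : Set V,
      U ∪ U' = {v | v ∉ F ∧ insert v F ∈ K.faces} ∧ U.Nonempty ∧ U'.Nonempty ∧
      ∀ u ∈ U, ∀ w ∈ U', insert u (insert w F) ∉ K.faces := by
  obtain ⟨F, H, H', ⟨hH, hFH⟩, ⟨hH', hFH'⟩, hne, hcard⟩ :=
    exists_subset_isFacet_card_ne_forall_insert hK
  obtain ⟨u, huH, huF⟩ := hH.exists_mem_notMem hH' (ne_of_apply_ne card hne) hFH'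
  obtain ⟨w, hwH', hwF⟩ := hH'.exists_mem_notMem hH (ne_of_apply_ne card hne.symm) hFH
  have huFH := insert_subset huH hFH
  have hwFH' := insert_subset hwH' hFH'
  refine ⟨F, K.down_closed hH.1 hFH, ?_,
    {v | v ∉ F ∧ ∃ E, K.IsFacet E ∧ insert v F ⊆ E ∧ #E = #H},
    {v | v ∉ F ∧ ∃ E, K.IsFacet E ∧ insert v F ⊆ E ∧ #E ≠ #H}, ?_,
    ⟨u, huF, H, hH, huFH, rfl⟩, ⟨w, hwF, H', hH', hwFH', hne.symm⟩, ?_⟩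
  · have hHle := card_le_card huFH
    have hHle' := card_le_card hwFH'
    rw [card_insert_of_notMem huF] at hHle
    rw [card_insert_of_notMem hwF] at hHle'
    rcases hne.lt_or_gt with h | h
    · exact ⟨H', hH'.1, hFH', by lia⟩
    · exact ⟨H, hH.1, hFH, by lia⟩
  · ext v
    constructor
    · rintro (⟨hv, E, hE, hvE, -⟩ | ⟨hv, E, hE, hvE, -⟩) <;>
        exact ⟨hv, K.down_closed hE.1 hvE⟩
    · rintro ⟨hv, hvK⟩
      obtain ⟨E, hE, hvE⟩ := exists_isFacet_superset hvK
      exact (eq_or_ne #E #H).imp (⟨hv, E, hE, hvE, ·⟩) (⟨hv, E, hE, hvE, ·⟩)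
  · rintro a ⟨haF, E, hE, haE, hEH⟩ b ⟨hbF, E', hE', hbE', hEH'⟩ hab
    obtain ⟨D, hD, habD⟩ := exists_isFacet_superset hab
    have hDE : #D = #E := hcard a haF D E hD hE
      ((insert_subset_insert a (subset_insert b F)).trans habD) haE
    have hDE' : #D = #E' := hcard b hbF D E' hD hE' ((subset_insert a _).trans habD) hbE'
    exact hEH' (hDE'.symm.trans (hDE.trans hEH))

theorem two_le_height_facePrime {G : Finset V} (hG : G ∈ K.faces) (hFG : F ⊆ G)
    (h : #F + 2 ≤ #G) : 2 ≤ (facePrime k K F).height := by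
  obtain ⟨E, hFE, hEG, hE⟩ := exists_subsuperset_card_eq hFG (n := #F + 1) (by lia) (by lia)
  have hFE' : F ⊂ E := ssubset_of_subset_of_ne hFE fun h => by lia
  have hEG' : E ⊂ G := ssubset_of_subset_of_ne hEG fun h => by lia
  have hEK := K.down_closed hG hEG
  have := facePrime_isPrime (k := k) hG
  have := facePrime_isPrime (k := k) hEK
  have := facePrime_isPrime (k := k) (K.down_closed hG hFG)
  calc (2 : ℕ∞) = 0 + 1 + 1 := by norm_num
    _ ≤ (facePrime k K G).height + 1 + 1 := by gcongr; exact bot_le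
    _ ≤ (facePrime k K E).height + 1 := by
      gcongr
      exact Ideal.height_add_one_le_of_lt_of_isPrime (facePrime_lt_facePrime hG hEG')
    _ ≤ (facePrime k K F).height :=
      Ideal.height_add_one_le_of_lt_of_isPrime (facePrime_lt_facePrime hEK hFE')

section Localization

variable [(facePrime k K F).IsPrime]

theorem prod_algebraMap_srX_eq_zero (hF : F ∈ K.faces) {s : Finset V} (hsF : Disjoint s F)
    (hs : s ∪ F ∉ K.faces) :
    ∏ v ∈ s, algebraMap _ (Localization.AtPrime (facePrime k K F)) (srX k K v) = 0 := by
  have hunit : ∏ v ∈ F, srX k K v ∈ (facePrime k K F).primeCompl := fun h => by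
    obtain ⟨v, hv, hvF⟩ := Ideal.IsPrime.prod_mem_iff.mp h
    exact (srX_mem_facePrime_iff hF).mp hvF hv
  rw [← map_prod]
  refine (IsLocalization.map_eq_zero_iff (facePrime k K F).primeCompl _ _).mpr ⟨⟨_, hunit⟩, ?_⟩
  rw [mul_comm, ← prod_union hsF, prod_srX_eq_zero hs]

theorem algebraMap_srX_ne_zero {v : V} (hv : insert v F ∈ K.faces) :
    algebraMap _ (Localization.AtPrime (facePrime k K F)) (srX k K v) ≠ 0 := by
  intro h
  obtain ⟨⟨t, ht⟩, htv⟩ :=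
    (IsLocalization.map_eq_zero_iff (facePrime k K F).primeCompl _ _).mp h
  have hprime := facePrime_isPrime (k := k) hv
  rcases hprime.mem_or_mem (htv ▸ zero_mem _) with htP | hvP
  · exact ht (facePrime_anti (subset_insert v F) htP)
  · exact (srX_mem_facePrime_iff hv).mp hvP (mem_insert_self v F)

theorem maximalIdeal_localization_facePrime (hF : F ∈ K.faces) :
    IsLocalRing.maximalIdeal (Localization.AtPrime (facePrime k K F)) =
      Ideal.span ((fun v => algebraMap _ _ (srX k K v)) ''
        {v | v ∉ F ∧ insert v F ∈ K.faces}) := by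
  rw [← Localization.AtPrime.map_eq_maximalIdeal]
  refine (Ideal.map_span _ _).trans ?_
  rw [Set.image_image]
  refine le_antisymm (Ideal.span_le.mpr ?_) (Ideal.span_mono (Set.image_mono fun v hv => hv.1))
  rintro _ ⟨v, hv, rfl⟩
  by_cases hvK : insert v F ∈ K.faces
  · exact Ideal.subset_span ⟨v, ⟨hv, hvK⟩, rfl⟩
  · have hzero := prod_algebraMap_srX_eq_zero (k := k) hF (disjoint_singleton_left.mpr hv) hvK
    rw [prod_singleton] at hzero
    simpa only [SetLike.mem_coe, hzero] using zero_mem _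

theorem not_depthGE_two_of_link_disconnected (hF : F ∈ K.faces)
    {U U' : Set V} (hUU' : U ∪ U' = {v | v ∉ F ∧ insert v F ∈ K.faces}) (hU : U.Nonempty)
    (hU' : U'.Nonempty) (hcross : ∀ u ∈ U, ∀ w ∈ U', insert u (insert w F) ∉ K.faces) :
    ¬DepthGE (Localization.AtPrime (facePrime k K F)) (Localization.AtPrime (facePrime k K F))
      2 := by
  let y (v : V) := algebraMap _ (Localization.AtPrime (facePrime k K F)) (srX k K v)
  have hmem {v : V} (hv : v ∈ U ∪ U') : v ∉ F ∧ insert v F ∈ K.faces := hUU'.le hv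
  have hne {W : Set V} (hW : W ⊆ U ∪ U') : W.Nonempty → Ideal.span (y '' W) ≠ ⊥ := by
    rintro ⟨v, hv⟩ h
    exact algebraMap_srX_ne_zero (hmem (hW hv)).2
      (Ideal.span_eq_bot.mp h _ (Set.mem_image_of_mem y hv))
  refine DepthGE.not_two_of_sup_eq_maximalIdeal ?_ ?_
    (hne Set.subset_union_left hU) (hne Set.subset_union_right hU')
  · rw [Ideal.span_mul_span', Ideal.span_eq_bot]
    rintro _ ⟨_, ⟨u, hu, rfl⟩, _, ⟨w, hw, rfl⟩, rfl⟩
    have huw : u ≠ w := by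
      rintro rfl
      exact hcross u hu u hw (by rw [insert_idem]; exact (hmem (.inl hu)).2)
    have hdisj : Disjoint {u, w} F := disjoint_insert_left.mpr
      ⟨(hmem (.inl hu)).1, disjoint_singleton_left.mpr (hmem (.inr hw)).1⟩
    refine (prod_pair huw).symm.trans (prod_algebraMap_srX_eq_zero hF hdisj ?_)
    rw [insert_union, singleton_union]
    exact hcross u hu w hw
  · rw [← Ideal.span_union, ← Set.image_union, hUU', maximalIdeal_localization_facePrime hF]

end Localization

theorem SerreS.pure (hℓ : 2 ≤ ℓ) (h : SerreS k ℓ K) : K.Pure := by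
  by_contra hK
  obtain ⟨F, hF, ⟨G, hG, hFG, hcard⟩, U, U', hUU', hU, hU', hcross⟩ :=
    exists_link_disconnected_of_not_pure hK
  have := facePrime_isPrime (k := k) hF
  exact not_depthGE_two_of_link_disconnected hF hUU' hU hU' hcross
    (serreCondS_iff.mp h (facePrime k K F) 2 hℓ (two_le_height_facePrime hG hFG hcard))

theorem Pure.exists_mem_link_card_le (hK : K.Pure)
    (hexc : ∀ H, K.IsFacet H → (J ∩ H).Nonempty) (hF : F ∈ (K.link {j}).faces) {G : Finset V}
    (hG : G ∈ (K.antistar J).faces) : ∃ G' ∈ (K.link {j}).faces, F ⊆ G' ∧ #G ≤ #G' := by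
  obtain ⟨hjF, hjFK⟩ := mem_link_singleton_iff.mp hF
  obtain ⟨hGK, hGJ⟩ := mem_antistar_iff.mp hG
  obtain ⟨H, hH, hGH⟩ := exists_isFacet_superset hGK
  obtain ⟨H', hH', hFH'⟩ := exists_isFacet_superset hjFK
  obtain ⟨i, hi⟩ := hexc H hH
  obtain ⟨hiJ, hiH⟩ := mem_inter.mp hi
  have hjH' : j ∈ H' := hFH' (mem_insert_self j F)
  refine ⟨H'.erase j, mem_link_singleton_iff.mpr ⟨notMem_erase j H', ?_⟩,
    subset_erase.mpr ⟨(subset_insert j F).trans hFH', hjF⟩, ?_⟩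
  · rw [insert_erase hjH']
    exact hH'.1
  · calc #G ≤ #(H.erase i) :=
          card_le_card (subset_erase.mpr ⟨hGH, disjoint_left.mp hGJ hiJ⟩)
      _ = #(H'.erase j) := by
          rw [card_erase_of_mem hiH, card_erase_of_mem hjH', hK H hH, hK H' hH']

end SComplex

/-- If `J ⊆ V(Δ)` is an excellent set for `Δ` (an independent set meeting every
facet) and `Δ` satisfies `(S_ℓ)`, then the anti-star `ast_Δ(J)` satisfies `(S_ℓ)`. -/
theorem excellent_antistar_serre {V : Type} [DecidableEq V] (k : Type) [Field k]
    (K : SComplex V) (J : Finset V)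
    (hJV : ∀ a ∈ J, ({a} : Finset V) ∈ K.faces)
    (hindep : ∀ a ∈ J, ∀ b ∈ J, a ≠ b → ({a, b} : Finset V) ∉ K.faces)
    (hexc : ∀ F : Finset V, K.IsFacet F → (J ∩ F).Nonempty)
    (ℓ : ℕ) (hserre : SComplex.SerreS k ℓ K) :
    SComplex.SerreS k ℓ (K.antistar J) := by
  refine serreCondS_iff.mpr fun P _ n hnℓ hnP => ?_
  rcases Nat.lt_or_ge n 2 with hn | hn
  · interval_cases n
    · exact fun i hi => absurd hi i.not_lt_zero
    · exact depthGE_one_of_isReduced hnP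
  have hpure : K.Pure := hserre.pure (hn.trans hnℓ)
  let f := (SComplex.srProj k (SComplex.antistar_faces_subset (K := K) (J := J))).toRingHom
  have hf : Function.Surjective f := SComplex.srProj_surjective _
  refine depthGE_of_ker_eq_span_image hf SComplex.ker_srProj_antistar (fun a ha b hb hab => ?_)
    (P.comap f) P rfl ?_ fun j _ => ?_
  · rw [← prod_pair hab, SComplex.prod_srX_eq_zero (hindep a ha b hb hab)]
  · exact serreCondS_iff.mp hserre _ n hnℓ (hnP.trans (height_le_height_comap_of_surjective hf P))
  · rw [← SComplex.ker_srProj_link]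
    refine depthGE_quotient_map_ker (SComplex.srProj_surjective _) _ fun P' _ hP' => ?_
    refine serreCondS_iff.mp hserre.link P' n hnℓ (hnP.trans ?_)
    exact SComplex.height_le_height_of_comap_srProj_eq _ _
      (fun F hF G hG _ => hpure.exists_mem_link_card_le hexc hF hG) P P' hP'
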